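/- arXiv:math/0312141 — 5 statements merged into one kernel-verified Lean document; each statement's English description precedes it below -/
import Mathlib

section
/- Let I = (a, b) be an open real interval, let y : ℝ → ℝ be continuous on I, and let α > 0 and β ≥ 0 be real constants. Assume that y satisfies the differential inequality y' + α y ≤ β in the sense of distributions on I, i.e. for every nonnegative smooth compactly supported function φ : ℝ → ℝ with support contained in I one has ∫ (−y(t) φ'(t) + α y(t) φ(t)) dt ≤ β ∫ φ(t) dt. Then for all s, t ∈ I with s ≤ t, y(t) ≤ y(s) e^{−α(t−s)} + (β/α)(1 − e^{−α(t−s)}). -/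
open MeasureTheory Set Real

lemma gd_integrable {a b : ℝ} {y g : ℝ → ℝ} (hy : ContinuousOn y (Ioo a b))
    (hg : Continuous g) (hc : HasCompactSupport g) (hs : tsupport g ⊆ Ioo a b) :
    Integrable (fun x => y x * g x) := by
  have h1 : IntegrableOn (fun x => y x * g x) (tsupport g) :=
    ((hy.mono hs).mul hg.continuousOn).integrableOn_compact hc
  refine (integrableOn_iff_integrable_of_support_subset ?_).1 h1
  intro x hx
  apply subset_tsupport
  intro h0
  apply hx
  simp [h0]

/-- The weighted function has nonpositive distributional derivative. -/
lemma gd_key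
    (a b : ℝ) (y : ℝ → ℝ) (α β : ℝ)
    (hy : ContinuousOn y (Ioo a b))
    (hα : 0 < α)
    (hineq : ∀ φ : ℝ → ℝ, ContDiff ℝ (⊤ : ℕ∞) φ → HasCompactSupport φ →
      (∀ t, 0 ≤ φ t) → tsupport φ ⊆ Ioo a b →
      ∫ t, (-(y t) * deriv φ t + α * y t * φ t) ≤ β * ∫ t, φ t)
    (ψ : ℝ → ℝ) (h1 : ContDiff ℝ (⊤ : ℕ∞) ψ) (h2 : HasCompactSupport ψ)
    (h3 : ∀ t, 0 ≤ ψ t) (h4 : tsupport ψ ⊆ Ioo a b) :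
    0 ≤ ∫ x, ((y x - β / α) * Real.exp (α * x)) * deriv ψ x := by
  have hE : ContDiff ℝ (⊤ : ℕ∞) (fun x : ℝ => Real.exp (α * x)) := by fun_prop
  have hEd : ∀ x : ℝ, HasDerivAt (fun x : ℝ => Real.exp (α * x)) (Real.exp (α * x) * α) x := by
    intro x
    simpa using ((hasDerivAt_id x).const_mul α).exp
  have hψd : ∀ x, HasDerivAt ψ (deriv ψ x) x := fun x =>
    (h1.differentiable (by simp) x).hasDerivAt
  have hφd : ∀ x, HasDerivAt (fun x => Real.exp (α * x) * ψ x)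
      (Real.exp (α * x) * α * ψ x + Real.exp (α * x) * deriv ψ x) x := fun x =>
    (hEd x).mul (hψd x)
  have hdc : Continuous (deriv ψ) := h1.continuous_deriv (by simp)
  have hdcs : HasCompactSupport (deriv ψ) := h2.deriv
  have hdsub : tsupport (deriv ψ) ⊆ Ioo a b := by
    refine subset_trans ?_ h4
    exact closure_minimal (support_deriv_subset) (isClosed_tsupport ψ)
  have hEc : Continuous (fun x : ℝ => Real.exp (α * x)) := hE.continuous
  have i1 : Integrable (fun x => Real.exp (α * x) * ψ x) :=
    gd_integrable hEc.continuousOn h1.continuous h2 h4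
  have i2 : Integrable (fun x => Real.exp (α * x) * deriv ψ x) :=
    gd_integrable hEc.continuousOn hdc hdcs hdsub
  have i3 : Integrable (fun x => (y x * Real.exp (α * x)) * deriv ψ x) :=
    gd_integrable (hy.mul hEc.continuousOn) hdc hdcs hdsub
  have hz := integral_eq_zero_of_hasDerivAt_of_integrable hφd
    (((i1.const_mul α).add i2).congr (Filter.Eventually.of_forall fun x => by
      simp only [Pi.add_apply]; ring)) i1
  have hz' : α * ∫ x, Real.exp (α * x) * ψ x = - ∫ x, Real.exp (α * x) * deriv ψ x := by
    have : ∫ x, (Real.exp (α * x) * α * ψ x + Real.exp (α * x) * deriv ψ x)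
        = α * (∫ x, Real.exp (α * x) * ψ x) + ∫ x, Real.exp (α * x) * deriv ψ x := by
      rw [← integral_const_mul, ← integral_add (i1.const_mul α) i2]
      congr 1; ext x; ring
    linarith
  have hsub : tsupport (fun x => Real.exp (α * x) * ψ x) ⊆ tsupport ψ :=
    closure_mono (fun x hx h0 => hx (by simp [h0]))
  have hh := hineq (fun x => Real.exp (α * x) * ψ x) (hE.mul h1) h2.mul_left
    (fun t => mul_nonneg (Real.exp_pos _).le (h3 t)) (hsub.trans h4)
  have e1 : ∫ t, (-(y t) * deriv (fun x => Real.exp (α * x) * ψ x) t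
      + α * y t * (Real.exp (α * t) * ψ t))
      = - ∫ x, (y x * Real.exp (α * x)) * deriv ψ x := by
    rw [← integral_neg]
    congr 1; ext x
    rw [(hφd x).deriv]; ring
  rw [e1] at hh
  have e2 : ∫ x, ((y x - β / α) * Real.exp (α * x)) * deriv ψ x
      = (∫ x, (y x * Real.exp (α * x)) * deriv ψ x)
        - β / α * ∫ x, Real.exp (α * x) * deriv ψ x := by
    rw [← integral_const_mul, ← integral_sub i3 (i2.const_mul _)]
    congr 1; ext x; ring
  rw [e2]
  have e3 : ∫ x, Real.exp (α * x) * deriv ψ x = - (α * ∫ x, Real.exp (α * x) * ψ x) := by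
    linarith
  rw [e3]
  have e4 : β / α * -(α * ∫ x, Real.exp (α * x) * ψ x)
      = - (β * ∫ x, Real.exp (α * x) * ψ x) := by
    field_simp
  rw [e4]
  linarith

lemma gd_mono {a b : ℝ} {z : ℝ → ℝ} (hz : ContinuousOn z (Ioo a b))
    (H : ∀ ψ : ℝ → ℝ, ContDiff ℝ (⊤ : ℕ∞) ψ → HasCompactSupport ψ →
      (∀ t, 0 ≤ ψ t) → tsupport ψ ⊆ Ioo a b → 0 ≤ ∫ x, z x * deriv ψ x)
    {s t : ℝ} (hs : s ∈ Ioo a b) (ht : t ∈ Ioo a b) (hst : s ≤ t) : z t ≤ z s := by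
  by_contra! hlt
  obtain ⟨c, hc1, hc2⟩ := exists_between hlt
  obtain ⟨d, hd1, hd2⟩ := exists_between hc2
  have n1 : ∀ᶠ x in nhds s, z x < c ∧ x ∈ Ioo a b :=
    ((hz.continuousAt (isOpen_Ioo.mem_nhds hs)).eventually_lt_const hc1).and
      (isOpen_Ioo.mem_nhds hs)
  have n2 : ∀ᶠ x in nhds t, d < z x ∧ x ∈ Ioo a b :=
    ((hz.continuousAt (isOpen_Ioo.mem_nhds ht)).eventually_const_lt hd2).and
      (isOpen_Ioo.mem_nhds ht)
  obtain ⟨δ1, hδ1, b1⟩ := Metric.eventually_nhds_iff.1 n1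
  obtain ⟨δ2, hδ2, b2⟩ := Metric.eventually_nhds_iff.1 n2
  obtain ⟨δ, hδ, hδm⟩ := exists_between (lt_min hδ1 hδ2)
  have hδs : δ < δ1 := hδm.trans_le (min_le_left _ _)
  have hδt : δ < δ2 := hδm.trans_le (min_le_right _ _)
  let f : ContDiffBump (0 : ℝ) := ⟨δ / 2, δ, by positivity, by linarith⟩
  set η : ℝ → ℝ := f.normed volume with hη
  have ηs : ContDiff ℝ (⊤ : ℕ∞) η := f.contDiff_normed
  have ηc : Continuous η := ηs.continuous
  have η0 : ∀ x, 0 ≤ η x := f.nonneg_normed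
  have η1 : ∫ x, η x = 1 := f.integral_normed
  have ηI : Integrable η := f.integrable_normed
  have ηz : ∀ x, δ ≤ |x| → η x = 0 := by
    intro x hx
    by_contra h
    have : x ∈ Function.support η := h
    rw [hη, f.support_normed_eq] at this
    have h' : |x| < δ := by simpa [f] using this
    linarith
  let P : ℝ → ℝ := fun x => ∫ u in (0:ℝ)..x, η u
  have hP : ∀ x, HasDerivAt P (η x) x := fun x =>
    ηc.integral_hasStrictDerivAt 0 x |>.hasDerivAt
  have hPs : ContDiff ℝ (⊤ : ℕ∞) P := by
    refine contDiff_infty_iff_deriv.2 ⟨fun x => (hP x).differentiableAt, ?_⟩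
    have : deriv P = η := funext fun x => (hP x).deriv
    rwa [this]
  let ψ : ℝ → ℝ := fun x => P (x - s) - P (x - t)
  have hψs : ContDiff ℝ (⊤ : ℕ∞) ψ :=
    (hPs.comp (contDiff_id.sub contDiff_const)).sub (hPs.comp (contDiff_id.sub contDiff_const))
  have hψe : ∀ x, ψ x = ∫ u in (x - t)..(x - s), η u := fun x =>
    intervalIntegral.integral_interval_sub_left (ηc.intervalIntegrable _ _)
      (ηc.intervalIntegrable _ _)
  have hψ0 : ∀ x, 0 ≤ ψ x := fun x => by
    rw [hψe]
    exact intervalIntegral.integral_nonneg (by linarith) (fun u _ => η0 u)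
  have hψd : ∀ x, deriv ψ x = η (x - s) - η (x - t) := fun x =>
    (((hP (x - s)).comp_sub_const x s).sub ((hP (x - t)).comp_sub_const x t)).deriv
  have hsupp : tsupport ψ ⊆ Icc (s - δ) (t + δ) := by
    refine closure_minimal ?_ isClosed_Icc
    intro x hx
    by_contra hn
    apply hx
    rw [hψe]
    have : ∀ u ∈ uIcc (x - t) (x - s), η u = (fun _ => (0:ℝ)) u := by
      intro u hu
      rw [uIcc_of_le (by linarith)] at hu
      apply ηz
      rw [mem_Icc, not_and_or, not_le, not_le] at hn
      rcases hn with hn | hn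
      · exact le_trans (by linarith [hu.2]) (neg_le_abs u)
      · exact le_trans (by linarith [hu.1]) (le_abs_self u)
    rw [intervalIntegral.integral_congr this]
    simp
  have ms : s - δ ∈ Ioo a b := (b1 (by rw [Real.dist_eq]; simpa [abs_of_pos hδ] using hδs)).2
  have mt : t + δ ∈ Ioo a b := (b2 (by rw [Real.dist_eq]; simpa [abs_of_pos hδ] using hδt)).2
  have hIcc : Icc (s - δ) (t + δ) ⊆ Ioo a b := fun x hx =>
    ⟨ms.1.trans_le hx.1, hx.2.trans_lt mt.2⟩
  have hcs : HasCompactSupport ψ := isCompact_Icc.of_isClosed_subset (isClosed_tsupport ψ) hsupp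
  have key := H ψ hψs hcs hψ0 (hsupp.trans hIcc)
  have hint : Integrable (fun x => z x * deriv ψ x) :=
    gd_integrable hz (hψs.continuous_deriv (by simp)) hcs.deriv
      ((closure_minimal support_deriv_subset (isClosed_tsupport ψ)).trans (hsupp.trans hIcc))
  have hle : ∫ x, z x * deriv ψ x ≤ ∫ x, (c * η (x - s) - d * η (x - t)) := by
    refine integral_mono hint (((ηI.comp_sub_right s).const_mul c).sub
      ((ηI.comp_sub_right t).const_mul d)) ?_
    intro x
    simp only [hψd]
    have k1 : z x * η (x - s) ≤ c * η (x - s) := by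
      rcases le_or_gt δ |x - s| with h | h
      · simp [ηz _ h]
      · exact mul_le_mul_of_nonneg_right (b1 (by rw [Real.dist_eq]; linarith)).1.le (η0 _)
    have k2 : d * η (x - t) ≤ z x * η (x - t) := by
      rcases le_or_gt δ |x - t| with h | h
      · simp [ηz _ h]
      · exact mul_le_mul_of_nonneg_right (b2 (by rw [Real.dist_eq]; linarith)).1.le (η0 _)
    linarith
  rw [integral_sub ((ηI.comp_sub_right s).const_mul c) ((ηI.comp_sub_right t).const_mul d),
    integral_const_mul, integral_const_mul, integral_sub_right_eq_self η s,
    integral_sub_right_eq_self η t, η1] at hle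
  linarith

/-- Gronwall-type inequality from a differential inequality `y' + α y ≤ β`
holding in the sense of distributions on the open interval `(a, b)`. -/
theorem gronwall_distributional
    (a b : ℝ) (y : ℝ → ℝ) (α β : ℝ)
    (hy : ContinuousOn y (Ioo a b))
    (hα : 0 < α) (hβ : 0 ≤ β)
    (hineq : ∀ φ : ℝ → ℝ, ContDiff ℝ (⊤ : ℕ∞) φ → HasCompactSupport φ →
      (∀ t, 0 ≤ φ t) → tsupport φ ⊆ Ioo a b →
      ∫ t, (-(y t) * deriv φ t + α * y t * φ t) ≤ β * ∫ t, φ t) :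
    ∀ s ∈ Ioo a b, ∀ t ∈ Ioo a b, s ≤ t →
      y t ≤ y s * Real.exp (-(α * (t - s)))
        + (β / α) * (1 - Real.exp (-(α * (t - s)))) := by
  intro s hs t ht hst
  have hz : ContinuousOn (fun x => (y x - β / α) * Real.exp (α * x)) (Ioo a b) :=
    (hy.sub continuousOn_const).mul (by fun_prop)
  have h := gd_mono hz (gd_key a b y α β hy hα hineq) hs ht hst
  have e : Real.exp (α * s) = Real.exp (-(α * (t - s))) * Real.exp (α * t) := by
    rw [← Real.exp_add]; congr 1; ring
  rw [e, ← mul_assoc] at h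
  have h' := le_of_mul_le_mul_right h (Real.exp_pos _)
  linarith
end

section
/- Let I = (a, b) be an open real interval, let y : ℝ → ℝ be continuous on I, let g : ℝ → ℝ be nonnegative and locally integrable on I, and let K ≥ 0. Assume that (1/2) y' + g ≤ K holds in the sense of distributions on I, i.e. for every nonnegative smooth compactly supported function φ : ℝ → ℝ with support contained in I one has ∫ (−(1/2) y(t) φ'(t) + g(t) φ(t)) dt ≤ K ∫ φ(t) dt. Then for all s, t ∈ I with s ≤ t, y(t) + 2 ∫_s^t g(r) dr ≤ y(s) + 2K(t − s). -/
open MeasureTheory Set Real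

lemma exists_step (p e : ℝ) (he : 0 < e) : ∃ A : ℝ → ℝ, ContDiff ℝ (⊤ : ℕ∞) A ∧
    (∀ x, 0 ≤ A x) ∧ (∀ x, A x ≤ 1) ∧ (∀ x, x ≤ p → A x = 0) ∧ (∀ x, p + e ≤ x → A x = 1) ∧
    (∀ x, 0 ≤ deriv A x) ∧ (∀ x, x ∉ Ioc p (p + e) → deriv A x = 0) ∧
    Integrable (deriv A) ∧ ∫ x, deriv A x = 1 := by
  have hc : ContDiff ℝ (⊤ : ℕ∞) (fun x : ℝ => smoothTransition ((x - p) / e)) :=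
    smoothTransition.contDiff.comp (by fun_prop)
  obtain ⟨A, hA⟩ : ∃ A : ℝ → ℝ, A = fun x : ℝ => smoothTransition ((x - p) / e) := ⟨_, rfl⟩
  rw [← hA] at hc
  have h0 : ∀ x, 0 ≤ A x := fun x => by rw [hA]; exact smoothTransition.nonneg _
  have h1 : ∀ x, A x ≤ 1 := fun x => by rw [hA]; exact smoothTransition.le_one _
  have hz : ∀ x, x ≤ p → A x = 0 := fun x hx => by
    rw [hA]; exact smoothTransition.zero_of_nonpos
      (div_nonpos_of_nonpos_of_nonneg (by linarith) he.le)
  have ho : ∀ x, p + e ≤ x → A x = 1 := fun x hx => by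
    rw [hA]; exact smoothTransition.one_of_one_le (by rw [le_div_iff₀ he]; linarith)
  have hm : Monotone A := by
    rw [hA]; intro x z hxz
    exact smoothTransition.monotone (by gcongr)
  have hd : ∀ x, x ∉ Ioc p (p + e) → deriv A x = 0 := by
    intro x hx
    rcases le_or_gt x p with h | h
    · apply IsLocalMin.deriv_eq_zero
      exact Filter.Eventually.of_forall fun z => by rw [hz x h]; exact h0 z
    · have : p + e ≤ x := by
        by_contra hh
        exact hx ⟨h, by linarith⟩
      apply IsLocalMax.deriv_eq_zero
      exact Filter.Eventually.of_forall fun z => by rw [ho x this]; exact h1 z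
  have hdc : Continuous (deriv A) := hc.continuous_deriv (by simp)
  refine ⟨A, hc, h0, h1, hz, ho, fun x => hm.deriv_nonneg, hd, ?_, ?_⟩
  · apply hdc.integrable_of_hasCompactSupport
    apply HasCompactSupport.intro (isCompact_Icc (a := p) (b := p + e))
    intro x hx
    exact hd x fun h => hx ⟨h.1.le, h.2⟩
  · rw [← intervalIntegral.integral_eq_integral_of_support_subset (a := p) (b := p + e)]
    · rw [intervalIntegral.integral_deriv_eq_sub]
      · rw [hz p le_rfl, ho _ le_rfl]; simp
      · intro x _
        exact (hc.differentiable (by simp)).differentiableAt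
      · exact hdc.intervalIntegrable _ _
    · intro x hx
      by_contra h
      exact hx (hd x h)

/-- Integrated energy inequality from `(1/2) y' + g ≤ K` in the sense of
distributions on the open interval `(a, b)`. -/
theorem energy_inequality_integrated
    (a b : ℝ) (y g : ℝ → ℝ) (K : ℝ)
    (hy : ContinuousOn y (Ioo a b))
    (hg0 : ∀ t ∈ Ioo a b, 0 ≤ g t)
    (hgloc : LocallyIntegrableOn g (Ioo a b))
    (hK : 0 ≤ K)
    (hineq : ∀ φ : ℝ → ℝ, ContDiff ℝ (⊤ : ℕ∞) φ → HasCompactSupport φ →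
      (∀ t, 0 ≤ φ t) → tsupport φ ⊆ Ioo a b →
      ∫ t, (-(1/2) * y t * deriv φ t + g t * φ t) ≤ K * ∫ t, φ t) :
    ∀ s ∈ Ioo a b, ∀ t ∈ Ioo a b, s ≤ t →
      y t + 2 * ∫ r in s..t, g r ≤ y s + 2 * K * (t - s) := by
  intro s hs t ht hst
  -- it suffices to prove the inequality up to an arbitrarily small error
  have key : ∀ δ > 0, y t + 2 * ∫ r in s..t, g r ≤ y s + 2 * K * (t - s) + (2 + 4 * K) * δ := by
    intro δ hδ
    have hcs := Metric.continuousAt_iff.1 (hy.continuousAt (isOpen_Ioo.mem_nhds hs)) δ hδ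
    have hct := Metric.continuousAt_iff.1 (hy.continuousAt (isOpen_Ioo.mem_nhds ht)) δ hδ
    obtain ⟨e1, he1, hys⟩ := hcs
    obtain ⟨e2, he2, hyt⟩ := hct
    obtain ⟨e, he, hea, heb, hee1, hee2, heδ⟩ : ∃ e > 0, e < s - a ∧ e < b - t ∧ e < e1 ∧
        e < e2 ∧ e < δ := by
      have : 0 < min (s - a) (min (b - t) (min e1 (min e2 δ))) := by
        simp only [lt_min_iff]
        exact ⟨by linarith [hs.1], by linarith [ht.2], he1, he2, hδ⟩
      obtain ⟨e, h0, h⟩ := exists_between this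
      simp only [lt_min_iff] at h
      exact ⟨e, h0, h⟩
    obtain ⟨A, hA, hA0, hA1, hAz, hAo, hAd, hAd0, hAi, hAI⟩ := exists_step (s - e) e he
    obtain ⟨B, hB, hB0, hB1, hBz, hBo, hBd, hBd0, hBi, hBI⟩ := exists_step t e he
    rw [sub_add_cancel] at hAo hAd0
    have hsub : Icc (s - e) (t + e) ⊆ Ioo a b := fun x hx =>
      ⟨by linarith [hx.1], by linarith [hx.2]⟩
    let φ : ℝ → ℝ := fun x => A x - B x
    have hφ : ContDiff ℝ (⊤ : ℕ∞) φ := hA.sub hB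
    have hφ0 : ∀ x, 0 ≤ φ x := by
      intro x
      rcases le_total x t with h | h
      · simp only [φ, hBz x h]; linarith [hA0 x]
      · simp only [φ, hAo x (hst.trans h)]; linarith [hB1 x]
    have hφ1 : ∀ x, φ x ≤ 1 := fun x => by simp only [φ]; linarith [hA1 x, hB0 x]
    have hφst : ∀ x ∈ Icc s t, φ x = 1 := fun x hx => by
      simp only [φ, hAo x hx.1, hBz x hx.2, sub_zero]
    have hφz : ∀ x, x ∉ Icc (s - e) (t + e) → φ x = 0 := by
      intro x hx
      rcases lt_or_ge x (s - e) with h | h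
      · simp only [φ, hAz x h.le, hBz x (by linarith), sub_zero]
      · have : t + e ≤ x := by
          by_contra hh
          exact hx ⟨h, by linarith⟩
        simp only [φ, hAo x (by linarith), hBo x this, sub_self]
    have hφd : ∀ x, deriv φ x = deriv A x - deriv B x := fun x =>
      deriv_sub (hA.differentiable (by simp)).differentiableAt
        (hB.differentiable (by simp)).differentiableAt
    have hφdz : ∀ x, x ∉ Icc (s - e) (t + e) → deriv φ x = 0 := by
      intro x hx
      rw [hφd, hAd0 x fun h => hx ⟨h.1.le, by linarith [h.2]⟩,
        hBd0 x fun h => hx ⟨by linarith [h.1], h.2⟩, sub_zero]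
    have hcomp : HasCompactSupport φ := HasCompactSupport.intro isCompact_Icc hφz
    have hts : tsupport φ ⊆ Icc (s - e) (t + e) := by
      apply closure_minimal _ isClosed_Icc
      intro x hx
      by_contra h
      exact hx (hφz x h)
    have hmain := hineq φ hφ hcomp hφ0 (hts.trans hsub)
    have hgI : IntegrableOn g (Icc (s - e) (t + e)) :=
      hgloc.integrableOn_compact_subset hsub isCompact_Icc
    have hi1 : Integrable (fun x => -(1/2) * y x * deriv φ x) := by
      have : IntegrableOn (fun x => -(1/2) * y x * deriv φ x) (Icc (s - e) (t + e)) := by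
        apply ContinuousOn.integrableOn_compact isCompact_Icc
        exact (continuousOn_const.mul (hy.mono hsub)).mul
          (hφ.continuous_deriv (by simp)).continuousOn
      apply (integrableOn_iff_integrable_of_support_subset _).1 this
      intro x hx
      by_contra h
      exact hx (by simp [hφdz x h])
    have hi2 : Integrable (fun x => g x * φ x) := by
      have : IntegrableOn (fun x => g x * φ x) (Icc (s - e) (t + e)) :=
        hgI.mul_continuousOn hφ.continuous.continuousOn isCompact_Icc
      apply (integrableOn_iff_integrable_of_support_subset _).1 this
      intro x hx
      by_contra h
      exact hx (by simp [hφz x h])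
    have hi3 : Integrable (fun x => (Ioc s t).indicator g x) := by
      rw [integrable_indicator_iff measurableSet_Ioc]
      exact hgI.mono_set fun x hx => ⟨by linarith [hx.1], by linarith [hx.2]⟩
    rw [integral_add hi1 hi2] at hmain
    have hb1 : -(1/2) * (y s + δ) + 1/2 * (y t - δ) ≤ ∫ x, -(1/2) * y x * deriv φ x := by
      have : ∫ x, (-(1/2) * (y s + δ) * deriv A x + 1/2 * (y t - δ) * deriv B x)
          = -(1/2) * (y s + δ) + 1/2 * (y t - δ) := by
        rw [integral_add (hAi.const_mul _) (hBi.const_mul _), integral_const_mul,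
          integral_const_mul, hAI, hBI, mul_one, mul_one]
      rw [← this]
      apply integral_mono ((hAi.const_mul _).add (hBi.const_mul _)) hi1
      intro x
      simp only [hφd, Pi.add_apply]
      have h1 : y x * deriv A x ≤ (y s + δ) * deriv A x := by
        by_cases hx : x ∈ Ioc (s - e) s
        · apply mul_le_mul_of_nonneg_right _ (hAd x)
          have := hys (x := x) (by
            rw [Real.dist_eq, abs_lt]; constructor <;> linarith [hx.1, hx.2])
          rw [Real.dist_eq, abs_lt] at this
          linarith [this.2]
        · simp [hAd0 x hx]
      have h2 : (y t - δ) * deriv B x ≤ y x * deriv B x := by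
        by_cases hx : x ∈ Ioc t (t + e)
        · apply mul_le_mul_of_nonneg_right _ (hBd x)
          have := hyt (x := x) (by
            rw [Real.dist_eq, abs_lt]; constructor <;> linarith [hx.1, hx.2])
          rw [Real.dist_eq, abs_lt] at this
          linarith [this.1]
        · simp [hBd0 x hx]
      linarith
    have hb2 : ∫ r in s..t, g r ≤ ∫ x, g x * φ x := by
      rw [intervalIntegral.integral_of_le hst, ← integral_indicator measurableSet_Ioc]
      apply integral_mono hi3 hi2
      intro x
      by_cases hx : x ∈ Ioc s t
      · simp [indicator_of_mem hx, hφst x ⟨hx.1.le, hx.2⟩]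
      · simp only [indicator_of_notMem hx]
        by_cases hx' : x ∈ Icc (s - e) (t + e)
        · exact mul_nonneg (hg0 x (hsub hx')) (hφ0 x)
        · simp [hφz x hx']
    have hb3 : ∫ x, φ x ≤ t - s + 2 * e := by
      have h : ∫ x, (Icc (s - e) (t + e)).indicator (fun _ => (1 : ℝ)) x = t - s + 2 * e := by
        rw [integral_indicator measurableSet_Icc]
        simp only [integral_const, smul_eq_mul, mul_one, measureReal_restrict_apply_univ,
          Real.volume_real_Icc]
        rw [max_eq_left (by linarith)]; ring
      rw [← h]
      apply integral_mono (hφ.continuous.integrable_of_hasCompactSupport hcomp)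
      · rw [integrable_indicator_iff measurableSet_Icc]
        exact integrableOn_const (by simp)
      · intro x
        by_cases hx : x ∈ Icc (s - e) (t + e)
        · simp only [indicator_of_mem hx]; exact hφ1 x
        · simp only [indicator_of_notMem hx, hφz x hx, le_refl]
    have hb4 : K * ∫ x, φ x ≤ K * (t - s + 2 * δ) :=
      mul_le_mul_of_nonneg_left (by linarith) hK
    linarith
  apply le_of_forall_pos_le_add
  intro η hη
  have hp : 0 < 2 + 4 * K := by linarith
  have := key (η / (2 + 4 * K)) (by positivity)
  rwa [mul_div_cancel₀ _ hp.ne'] at this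
end

section
/- Let I = (a, b) be an open real interval, let y : ℝ → ℝ be continuous on I, let g : ℝ → ℝ be locally integrable on I, and let α > 0. Assume that (1/2) y' + (α/2) y + g ≤ 0 holds in the sense of distributions on I, i.e. for every nonnegative smooth compactly supported function φ : ℝ → ℝ with support contained in I one has ∫ (−(1/2) y(t) φ'(t) + (α/2) y(t) φ(t) + g(t) φ(t)) dt ≤ 0. Then for all s, t ∈ I with s ≤ t, y(t) ≤ y(s) e^{−α(t−s)} − 2 ∫_s^t e^{−α(t−r)} g(r) dr. -/
open MeasureTheory Set Real

/-- Smoothed indicator of `[s, t]`. -/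
noncomputable def wei_psi (ρ : ContDiffBump (0 : ℝ)) (s t x : ℝ) : ℝ :=
  ∫ u in (x - t)..(x - s), ρ.normed volume u

theorem wei_hasDeriv (ρ : ContDiffBump (0 : ℝ)) (s t x : ℝ) :
    HasDerivAt (wei_psi ρ s t)
      (ρ.normed volume (x - s) - ρ.normed volume (x - t)) x := by
  have hc : Continuous (ρ.normed volume) := ρ.continuous_normed
  have h0 : ∀ v : ℝ, HasDerivAt (fun u => ∫ r in (0 : ℝ)..u, ρ.normed volume r)
      (ρ.normed volume v) v := fun v =>
    intervalIntegral.integral_hasDerivAt_right (hc.intervalIntegrable _ _)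
      (hc.stronglyMeasurableAtFilter _ _) hc.continuousAt
  have h1 := (h0 (x - s)).comp x ((hasDerivAt_id x).sub_const s)
  have h2 := (h0 (x - t)).comp x ((hasDerivAt_id x).sub_const t)
  have h3 := h1.sub h2
  simp only [mul_one] at h3
  refine h3.congr_of_eventuallyEq (Filter.Eventually.of_forall fun z => ?_)
  simp only [wei_psi, Function.comp, Pi.sub_apply, id]
  rw [intervalIntegral.integral_interval_sub_left] <;> exact hc.intervalIntegrable _ _

theorem wei_deriv (ρ : ContDiffBump (0 : ℝ)) (s t : ℝ) :
    deriv (wei_psi ρ s t) =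
      fun x => ρ.normed volume (x - s) - ρ.normed volume (x - t) :=
  funext fun x => (wei_hasDeriv ρ s t x).deriv

theorem wei_contDiff (ρ : ContDiffBump (0 : ℝ)) (s t : ℝ) :
    ContDiff ℝ (⊤ : ℕ∞) (wei_psi ρ s t) := by
  refine contDiff_infty_iff_deriv.2
    ⟨fun x => (wei_hasDeriv ρ s t x).differentiableAt, ?_⟩
  rw [wei_deriv]
  have h : ContDiff ℝ (⊤ : ℕ∞) (ρ.normed volume) := ρ.contDiff_normed
  exact (h.comp (contDiff_id.sub contDiff_const)).sub
    (h.comp (contDiff_id.sub contDiff_const))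

theorem wei_nonneg (ρ : ContDiffBump (0 : ℝ)) {s t : ℝ} (hst : s ≤ t) (x : ℝ) :
    0 ≤ wei_psi ρ s t x :=
  intervalIntegral.integral_nonneg_of_forall (by linarith) fun u => ρ.nonneg_normed u

theorem wei_le_one (ρ : ContDiffBump (0 : ℝ)) {s t : ℝ} (hst : s ≤ t) (x : ℝ) :
    wei_psi ρ s t x ≤ 1 := by
  rw [wei_psi, intervalIntegral.integral_of_le (by linarith), ← ρ.integral_normed (μ := volume)]
  exact setIntegral_le_integral ρ.integrable_normed
    (Filter.Eventually.of_forall fun u => ρ.nonneg_normed u)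

theorem wei_normed_zero (ρ : ContDiffBump (0 : ℝ)) {u : ℝ} (h : ρ.rOut ≤ |u|) :
    ρ.normed volume u = 0 := by
  have : u ∉ Function.support (ρ.normed volume) := by
    rw [ρ.support_normed_eq]; simpa using h
  simpa using this

theorem wei_left (ρ : ContDiffBump (0 : ℝ)) {s t x : ℝ} (hst : s ≤ t)
    (h : x ≤ s - ρ.rOut) : wei_psi ρ s t x = 0 := by
  have := ρ.rOut_pos
  rw [wei_psi, intervalIntegral.integral_congr (g := fun _ => (0 : ℝ))]
  · simp
  · intro u hu
    rw [uIcc_of_le (by linarith)] at hu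
    exact wei_normed_zero ρ (by rw [le_abs]; right; linarith [hu.2])

theorem wei_right (ρ : ContDiffBump (0 : ℝ)) {s t x : ℝ} (hst : s ≤ t)
    (h : t + ρ.rOut ≤ x) : wei_psi ρ s t x = 0 := by
  have := ρ.rOut_pos
  rw [wei_psi, intervalIntegral.integral_congr (g := fun _ => (0 : ℝ))]
  · simp
  · intro u hu
    rw [uIcc_of_le (by linarith)] at hu
    exact wei_normed_zero ρ (by rw [le_abs]; left; linarith [hu.1])

theorem wei_mid (ρ : ContDiffBump (0 : ℝ)) {s t x : ℝ}
    (h1 : s + ρ.rOut ≤ x) (h2 : x ≤ t - ρ.rOut) : wei_psi ρ s t x = 1 := by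
  rw [wei_psi, intervalIntegral.integral_eq_integral_of_support_subset, ρ.integral_normed]
  rw [ρ.support_normed_eq]
  intro u hu
  simp only [Metric.mem_ball, dist_zero_right, norm_eq_abs, abs_lt] at hu
  exact ⟨by linarith, by linarith⟩

theorem wei_tsupport (ρ : ContDiffBump (0 : ℝ)) {s t : ℝ} (hst : s ≤ t) :
    tsupport (wei_psi ρ s t) ⊆ Icc (s - ρ.rOut) (t + ρ.rOut) := by
  refine closure_minimal ?_ isClosed_Icc
  intro x hx
  by_contra hn
  apply hx
  by_cases h : x ≤ s - ρ.rOut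
  · exact wei_left ρ hst h
  · refine wei_right ρ hst ?_
    by_contra h'
    exact hn ⟨by linarith, by linarith⟩

open Filter Topology in
theorem wei_core (Y G : ℝ → ℝ) (s t δ : ℝ) (hst : s ≤ t) (hδ : 0 < δ)
    (hY : Integrable Y) (hG : Integrable G) (hs : ContinuousAt Y s) (ht : ContinuousAt Y t)
    (h : ∀ ψ : ℝ → ℝ, ContDiff ℝ (⊤ : ℕ∞) ψ → (∀ x, 0 ≤ ψ x) →
      tsupport ψ ⊆ Icc (s - δ) (t + δ) → ∫ x, (-(Y x * deriv ψ x) + G x * ψ x) ≤ 0) :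
    Y t - Y s + ∫ x in s..t, G x ≤ 0 := by
  let ρ : ℕ → ContDiffBump (0 : ℝ) := fun n =>
    ⟨δ / (n + 1) / 2, δ / (n + 1), by positivity, half_lt_self (by positivity)⟩
  have hr : ∀ n, (ρ n).rOut ≤ δ := fun n =>
    div_le_self hδ.le (by linarith [(Nat.cast_nonneg n : (0 : ℝ) ≤ n)])
  have hr0 : Tendsto (fun n => (ρ n).rOut) atTop (𝓝 0) := by
    exact tendsto_const_div_atTop_nhds_zero_nat δ |>.comp (tendsto_add_atTop_nat 1) |>.congr
      (fun n => by simp [ρ])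
  have hlim : ∀ z, ContinuousAt Y z →
      Tendsto (fun n => ∫ x, Y x * (ρ n).normed volume (x - z)) atTop (𝓝 (Y z)) := by
    intro z hz
    have := ContDiffBump.convolution_tendsto_right (μ := volume) (φ := ρ) (g := fun _ => Y)
      (k := fun _ => z) (x₀ := z) (z₀ := Y z) hr0
      (Eventually.of_forall fun _ => hY.aestronglyMeasurable)
      (hz.tendsto.comp tendsto_snd) tendsto_const_nhds
    refine this.congr fun n => ?_
    rw [convolution_lsmul_swap]
    refine integral_congr_ae (Eventually.of_forall fun x => ?_)
    simp only [smul_eq_mul]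
    rw [← ContDiffBump.normed_neg, neg_sub, mul_comm]
  have hint : ∀ z n, Integrable (fun x => Y x * (ρ n).normed volume (x - z)) := by
    intro z n
    have hc : Continuous ((ρ n).normed volume) := (ρ n).continuous_normed
    obtain ⟨C, hC⟩ := hc.bounded_above_of_compact_support (ρ n).hasCompactSupport_normed
    exact hY.mul_bdd (c := C) (hc.comp (continuous_id.sub continuous_const)).aestronglyMeasurable
      (Eventually.of_forall fun x => hC _)
  have hbd : ∀ n x, ‖wei_psi (ρ n) s t x‖ ≤ 1 := fun n x => by
    rw [norm_eq_abs, abs_of_nonneg (wei_nonneg _ hst x)]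
    exact wei_le_one _ hst x
  have hψm : ∀ n, AEStronglyMeasurable (wei_psi (ρ n) s t) volume := fun n =>
    (wei_contDiff (ρ n) s t).continuous.aestronglyMeasurable
  have hGi : ∀ n, Integrable (fun x => G x * wei_psi (ρ n) s t x) := fun n =>
    hG.mul_bdd (hψm n) (Eventually.of_forall (hbd n))
  have hGlim : Tendsto (fun n => ∫ x, G x * wei_psi (ρ n) s t x) atTop
      (𝓝 (∫ x in s..t, G x)) := by
    rw [intervalIntegral.integral_of_le hst, ← integral_indicator measurableSet_Ioc]
    refine tendsto_integral_of_dominated_convergence (fun x => ‖G x‖)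
      (fun n => (hGi n).aestronglyMeasurable) hG.norm (fun n => Eventually.of_forall fun x => ?_) ?_
    · rw [norm_mul]
      exact mul_le_of_le_one_right (norm_nonneg _) (hbd n x)
    · have e1 : ∀ᵐ x : ℝ, x ≠ s := by simp [ae_iff]
      have e2 : ∀ᵐ x : ℝ, x ≠ t := by simp [ae_iff]
      filter_upwards [e1, e2] with x hxs hxt
      have hev : ∀ c : ℝ, 0 < c → ∀ᶠ n in atTop, (ρ n).rOut < c := fun c hc =>
        hr0.eventually (gt_mem_nhds hc)
      rcases lt_or_gt_of_ne hxs with h1 | h1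
      · rw [indicator_of_notMem (fun h => absurd h.1 (by linarith))]
        refine tendsto_const_nhds.congr' ?_
        filter_upwards [hev (s - x) (by linarith)] with n hn
        rw [wei_left _ hst (by linarith), mul_zero]
      rcases lt_or_gt_of_ne hxt with h2 | h2
      · rw [indicator_of_mem (show x ∈ Ioc s t from ⟨h1, h2.le⟩)]
        refine tendsto_const_nhds.congr' ?_
        filter_upwards [hev (x - s) (by linarith), hev (t - x) (by linarith)] with n hn hn'
        rw [wei_mid _ (by linarith) (by linarith), mul_one]
      · rw [indicator_of_notMem (fun h => absurd h.2 (by linarith))]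
        refine tendsto_const_nhds.congr' ?_
        filter_upwards [hev (x - t) (by linarith)] with n hn
        rw [wei_right _ hst (by linarith), mul_zero]
  refine le_of_tendsto (((hlim t ht).sub (hlim s hs)).add hGlim)
    (Eventually.of_forall fun n => ?_)
  have key := h _ (wei_contDiff (ρ n) s t) (wei_nonneg _ hst)
    ((wei_tsupport (ρ n) hst).trans (Icc_subset_Icc (by linarith [hr n]) (by linarith [hr n])))
  rw [wei_deriv] at key
  have hsub : Integrable (fun x => Y x * (ρ n).normed volume (x - t)
      - Y x * (ρ n).normed volume (x - s)) := (hint t n).sub (hint s n)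
  rw [← integral_sub (hint t n) (hint s n), ← integral_add hsub (hGi n)]
  refine le_of_eq_of_le (integral_congr_ae (Eventually.of_forall fun x => ?_)) key
  simp only
  ring

/-- Exponentially weighted integral inequality from
`(1/2) y' + (α/2) y + g ≤ 0` in the sense of distributions on `(a, b)`. -/
theorem weighted_energy_inequality
    (a b : ℝ) (y g : ℝ → ℝ) (α : ℝ)
    (hy : ContinuousOn y (Ioo a b))
    (hgloc : LocallyIntegrableOn g (Ioo a b))
    (hα : 0 < α)
    (hineq : ∀ φ : ℝ → ℝ, ContDiff ℝ (⊤ : ℕ∞) φ → HasCompactSupport φ →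
      (∀ t, 0 ≤ φ t) → tsupport φ ⊆ Ioo a b →
      ∫ t, (-(1/2) * y t * deriv φ t + (α/2) * y t * φ t + g t * φ t) ≤ 0) :
    ∀ s ∈ Ioo a b, ∀ t ∈ Ioo a b, s ≤ t →
      y t ≤ y s * Real.exp (-(α * (t - s)))
        - 2 * ∫ r in s..t, Real.exp (-(α * (t - r))) * g r := by
  intro s hs t ht hst
  obtain ⟨δ, hδ, hδs, hδt⟩ : ∃ δ > 0, a < s - δ ∧ t + δ < b := by
    refine ⟨min (s - a) (b - t) / 2, ?_, ?_, ?_⟩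
    · have := lt_min (sub_pos.2 hs.1) (sub_pos.2 ht.2); positivity
    · have := min_le_left (s - a) (b - t); linarith [hs.1]
    · have := min_le_right (s - a) (b - t); linarith [ht.2]
  set K : Set ℝ := Icc (s - δ) (t + δ) with hK
  have hKI : K ⊆ Ioo a b := fun x hx => ⟨hδs.trans_le hx.1, hx.2.trans_lt hδt⟩
  have hKm : MeasurableSet K := measurableSet_Icc
  have hE : Continuous fun x : ℝ => exp (α * x) := by fun_prop
  set Y : ℝ → ℝ := K.indicator (fun x => y x * exp (α * x)) with hYdef
  set G : ℝ → ℝ := K.indicator (fun x => 2 * (g x * exp (α * x))) with hGdef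
  have hgK : IntegrableOn g K := hgloc.integrableOn_compact_subset hKI isCompact_Icc
  have hY : Integrable Y := (integrable_indicator_iff hKm).2
    (((hy.mono hKI).mul hE.continuousOn).integrableOn_compact isCompact_Icc)
  have hG : Integrable G := (integrable_indicator_iff hKm).2
    ((hgK.mul_continuousOn hE.continuousOn isCompact_Icc).const_mul 2)
  have hcont : ∀ z, s ≤ z → z ≤ t → ContinuousAt Y z := by
    intro z h1 h2
    have hz : K ∈ nhds z := Icc_mem_nhds (by linarith) (by linarith)
    have : ContinuousAt (fun x => y x * exp (α * x)) z :=
      (((hy.mono hKI).mul hE.continuousOn).continuousAt hz)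
    refine this.congr ?_
    filter_upwards [hz] with x hx
    rw [hYdef, indicator_of_mem hx]
  have core := wei_core Y G s t δ hst hδ hY hG (hcont s le_rfl hst) (hcont t hst le_rfl) (by
    intro ψ hψ hψ0 hψs
    have hsub : tsupport (fun x => exp (α * x) * ψ x) ⊆ tsupport ψ :=
      tsupport_mul_subset_right (f := fun x => exp (α * x))
    have hcs : HasCompactSupport ψ :=
      isCompact_Icc.of_isClosed_subset (isClosed_tsupport _) hψs
    have key := hineq (fun x => exp (α * x) * ψ x)
      ((contDiff_exp.comp (contDiff_const.mul contDiff_id)).mul hψ)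
      (hcs.mul_left (f := fun x => exp (α * x)))
      (fun x => mul_nonneg (exp_pos _).le (hψ0 x)) (hsub.trans (hψs.trans hKI))
    have e : ∫ x, (-(Y x * deriv ψ x) + G x * ψ x) = 2 * ∫ x,
        (-(1/2) * y x * deriv (fun x => exp (α * x) * ψ x) x
          + (α/2) * y x * (exp (α * x) * ψ x) + g x * (exp (α * x) * ψ x)) := by
      rw [← integral_const_mul]
      refine integral_congr_ae (Filter.Eventually.of_forall fun x => ?_)
      have hd : deriv (fun x => exp (α * x) * ψ x) x
          = exp (α * x) * α * ψ x + exp (α * x) * deriv ψ x := by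
        have h1 : HasDerivAt (fun x => exp (α * x)) (exp (α * x) * α) x := by
          simpa using ((hasDerivAt_id x).const_mul α).exp
        have h2 : HasDerivAt ψ (deriv ψ x) x :=
          ((hψ.differentiable (by simp)) x).hasDerivAt
        exact (h1.mul h2).deriv
      simp only [hd]
      by_cases hx : x ∈ K
      · rw [hYdef, hGdef, indicator_of_mem hx, indicator_of_mem hx]; ring
      · have hx' : x ∉ tsupport ψ := fun h => hx (hψs h)
        have z1 : ψ x = 0 := image_eq_zero_of_notMem_tsupport hx'
        have z2 : deriv ψ x = 0 := by
          by_contra hne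
          exact hx' (support_deriv_subset hne)
        rw [z1, z2]; ring
    rw [e]
    linarith)
  have hsK : s ∈ K := ⟨by linarith, by linarith⟩
  have htK : t ∈ K := ⟨by linarith, by linarith⟩
  have hint : ∫ x in s..t, G x
      = 2 * exp (α * t) * ∫ r in s..t, exp (-(α * (t - r))) * g r := by
    rw [← intervalIntegral.integral_const_mul]
    refine intervalIntegral.integral_congr fun x hx => ?_
    rw [uIcc_of_le hst] at hx
    have hxK : x ∈ K := ⟨by linarith [hx.1], by linarith [hx.2]⟩
    have : exp (α * x) = exp (α * t) * exp (-(α * (t - x))) := by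
      rw [← exp_add]; ring_nf
    simp only [hGdef, indicator_of_mem hxK, this]
    ring
  rw [hint, hYdef, indicator_of_mem hsK, indicator_of_mem htK] at core
  have hes : exp (α * s) = exp (α * t) * exp (-(α * (t - s))) := by
    rw [← exp_add]; ring_nf
  rw [hes] at core
  have hp := exp_pos (α * t)
  refine le_of_mul_le_mul_left ?_ hp
  linarith
end

section
/- Let H be a separable real Hilbert space, let t₀ ∈ ℝ, and let u : ℝ → H be a function with sup_{t > t₀} ‖u(t)‖ < ∞. Then ω_w(u) attracts u in the weak topology: for every set O ⊆ H that is open in the weak topology of H and contains ω_w(u), there exists T > t₀ such that u(t) ∈ O for all t ≥ T. -/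
open Filter Topology Set

/-- The weak ω-limit set of `u : ℝ → H` relative to the initial time `t₀`. -/
def weakOmegaLimit {H : Type*} [NormedAddCommGroup H] [InnerProductSpace ℝ H]
    (t₀ : ℝ) (u : ℝ → H) : Set H :=
  {v | ∃ t : ℕ → ℝ, (∀ n, t₀ < t n) ∧ Tendsto t atTop atTop ∧
    ∀ f : H →L[ℝ] ℝ, Tendsto (fun n => f (u (t n))) atTop (𝓝 (f v))}

/-- The weak ω-limit set attracts `u` in the weak topology: every weakly open
set containing it contains `u t` for all sufficiently large `t`. -/
theorem weakOmegaLimit_attracts_weakly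
    {H : Type*} [NormedAddCommGroup H] [InnerProductSpace ℝ H]
    [CompleteSpace H] [TopologicalSpace.SeparableSpace H]
    (t₀ : ℝ) (u : ℝ → H) (R : ℝ) (hbdd : ∀ t, t₀ < t → ‖u t‖ ≤ R) :
    ∀ O : Set (WeakSpace ℝ H), IsOpen O →
      (toWeakSpace ℝ H) '' (weakOmegaLimit t₀ u) ⊆ O →
      ∃ T, t₀ < T ∧ ∀ t, T ≤ t → toWeakSpace ℝ H (u t) ∈ O := by
  intro O hO hsub
  by_contra! hcon
  have hn : ∀ n : ℕ, ∃ t, t₀ + 1 + n ≤ t ∧ toWeakSpace ℝ H (u t) ∉ O := fun n =>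
    hcon (t₀ + 1 + n) (by have := n.cast_nonneg (α := ℝ); linarith)
  choose t ht htO using hn
  have ht0 : ∀ n, t₀ < t n := fun n => by
    have := ht n
    have := n.cast_nonneg (α := ℝ)
    linarith
  have htt : Tendsto t atTop atTop :=
    tendsto_atTop_mono ht (tendsto_atTop_add_const_left _ _ tendsto_natCast_atTop_atTop)
  obtain ⟨w, -, φ, hφ, hw⟩ := WeakDual.isSeqCompact_closedBall ℝ H 0 R
    (x := fun n => StrongDual.toWeakDual (InnerProductSpace.toDual ℝ H (u (t n))))
    (fun n => by simpa using hbdd _ (ht0 n))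
  set v : H := (InnerProductSpace.toDual ℝ H).symm (WeakDual.toStrongDual w) with hv
  have key : ∀ f : H →L[ℝ] ℝ, Tendsto (fun n => f (u (t (φ n)))) atTop (𝓝 (f v)) := by
    intro f
    have h1 := ((WeakDual.eval_continuous
      ((InnerProductSpace.toDual ℝ H).symm f)).tendsto w).comp hw
    have e1 : ∀ x : H, f x = InnerProductSpace.toDual ℝ H x
        ((InnerProductSpace.toDual ℝ H).symm f) := fun x => by
      rw [InnerProductSpace.toDual_apply_apply, real_inner_comm,
        InnerProductSpace.toDual_symm_apply]
    have e2 : f v = w ((InnerProductSpace.toDual ℝ H).symm f) := by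
      rw [e1, hv, LinearIsometryEquiv.apply_symm_apply]
      rfl
    rw [e2]
    simp only [e1]
    exact h1
  have hvm : v ∈ weakOmegaLimit t₀ u :=
    ⟨fun n => t (φ n), fun n => ht0 _, htt.comp hφ.tendsto_atTop, key⟩
  have hvO : toWeakSpace ℝ H v ∈ O := hsub ⟨v, hvm, rfl⟩
  have hlim : Tendsto (fun n => toWeakSpace ℝ H (u (t (φ n)))) atTop
      (𝓝 (toWeakSpace ℝ H v)) := by
    refine (WeakBilin.tendsto_iff_forall_eval_tendsto (topDualPairing ℝ H).flip ?_).2 ?_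
    · intro a b hab
      refine ext_inner_left ℝ fun x => ?_
      exact DFunLike.congr_fun hab (InnerProductSpace.toDual ℝ H x)
    · exact key
  obtain ⟨n, hn⟩ := (hlim.eventually (hO.mem_nhds hvO)).exists
  exact htO _ hn
end

section
/- Let H be a separable real Hilbert space, let t₀ ∈ ℝ, and let u : ℝ → H be a function with sup_{t > t₀} ‖u(t)‖ < ∞. Assume that for every sequence tₙ > t₀ with tₙ → ∞ and every v ∈ H such that u(tₙ) converges weakly to v, one also has ‖u(tₙ) − v‖ → 0. Then ω_w(u) attracts u in the strong topology of H: for every ε > 0 there exists T > t₀ such that for all t ≥ T there exists v ∈ ω_w(u) with ‖u(t) − v‖ < ε. -/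
open Filter Topology Set

/-- If every weakly convergent sequence `u (tₙ)` (with `tₙ > t₀`, `tₙ → ∞`)
converges strongly to its weak limit, then the weak ω-limit set attracts `u`
in the strong topology of `H`. -/
theorem weakOmegaLimit_attracts_strongly
    {H : Type*} [NormedAddCommGroup H] [InnerProductSpace ℝ H]
    [CompleteSpace H] [TopologicalSpace.SeparableSpace H]
    (t₀ : ℝ) (u : ℝ → H) (R : ℝ) (hbdd : ∀ t, t₀ < t → ‖u t‖ ≤ R)
    (hstrong : ∀ (t : ℕ → ℝ) (v : H), (∀ n, t₀ < t n) → Tendsto t atTop atTop →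
      (∀ f : H →L[ℝ] ℝ, Tendsto (fun n => f (u (t n))) atTop (𝓝 (f v))) →
      Tendsto (fun n => ‖u (t n) - v‖) atTop (𝓝 0)) :
    ∀ ε > 0, ∃ T, t₀ < T ∧ ∀ t, T ≤ t →
      ∃ v ∈ weakOmegaLimit t₀ u, ‖u t - v‖ < ε := by
  intro ε hε
  by_contra! hcon
  have hT : ∀ n : ℕ, t₀ < max t₀ 0 + n + 1 := fun n => by
    have h1 := le_max_left t₀ 0
    have h2 : (0 : ℝ) ≤ n := n.cast_nonneg
    linarith
  choose t ht hfar using fun n : ℕ => hcon _ (hT n)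
  have ht0 : ∀ n, t₀ < t n := fun n => (hT n).trans_le (ht n)
  have htop : Tendsto t atTop atTop := by
    refine tendsto_atTop_mono (fun n => ?_) (tendsto_natCast_atTop_atTop (R := ℝ))
    have h1 := le_max_right t₀ 0
    have h2 := ht n
    linarith
  let w : ℕ → WeakDual ℝ H := fun n =>
    StrongDual.toWeakDual (InnerProductSpace.toDual ℝ H (u (t n)))
  have hw : ∀ n, w n ∈ WeakDual.toStrongDual ⁻¹'
      Metric.closedBall (0 : StrongDual ℝ H) R := by
    intro n
    have h : InnerProductSpace.toDual ℝ H (u (t n)) ∈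
        Metric.closedBall (0 : StrongDual ℝ H) R := by
      rw [mem_closedBall_zero_iff, LinearIsometryEquiv.norm_map]
      exact hbdd _ (ht0 n)
    exact h
  obtain ⟨a, -, φ, hφ, hlim⟩ := WeakDual.isSeqCompact_closedBall ℝ H 0 R hw
  let v : H := (InnerProductSpace.toDual ℝ H).symm (WeakDual.toStrongDual a)
  have hweak : ∀ f : H →L[ℝ] ℝ,
      Tendsto (fun n => f (u (t (φ n)))) atTop (𝓝 (f v)) := by
    intro f
    obtain ⟨y, rfl⟩ := (InnerProductSpace.toDual ℝ H).surjective f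
    have h1 : Tendsto (fun n => w (φ n) y) atTop (𝓝 (a y)) :=
      ((WeakDual.eval_continuous y).tendsto a).comp hlim
    have h2 : InnerProductSpace.toDual ℝ H y v = a y := by
      rw [InnerProductSpace.toDual_apply_apply, real_inner_comm]
      exact InnerProductSpace.toDual_symm_apply
    rw [h2]
    refine h1.congr fun n => ?_
    rw [InnerProductSpace.toDual_apply_apply, real_inner_comm]
    exact InnerProductSpace.toDual_apply_apply
  have htop' := htop.comp hφ.tendsto_atTop
  have hs := hstrong (fun n => t (φ n)) v (fun n => ht0 _) htop' hweak
  obtain ⟨n, hn⟩ := (hs.eventually (gt_mem_nhds hε)).exists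
  exact absurd hn (not_lt.mpr (hfar (φ n) v ⟨fun n => t (φ n), fun n => ht0 _, htop', hweak⟩))
end
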